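/- arXiv:1205.3044 — 2 statements merged into one kernel-verified Lean document; each statement's English description precedes it below -/
import Mathlib

section
/- For the quadratic-cubic normal form g(u,v) = (u, uv + (b₃/6)v³, A₂(u,v) + A₃(u,v)) with a₀₂ ≠ 0, the double point locus in the parameter plane admits a smooth parameterization γ(v) = (−(b₃/6)v² + O(v³), v); in particular its tangent direction at the origin is the v-axis. -/
open Asymptotics

/-!
Two distinct points of the source have the same image exactly when they are `(u, v)` and `(u, w)`
with `v ≠ w` and the divided differences in the second variable of the last two components of the
map vanish. For the second component this says `u = -k (v² + v w + w²)`; substituting it into the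
equation of the third leaves one equation in `(v, w)`, symmetric under exchanging `v` and `w`. The
implicit function theorem solves it by `w = ψ v`, and the symmetry forces `ψ' 0 = -1`. Hence
`v + ψ v = O(v²)`, and `u = -k v² - k ψ v (v + ψ v) = -k v² + O(v³)`.
-/

open Filter Set
open scoped Topology ContDiff

section Calculus

lemma exists_contDiff_eventuallyEq {E F : Type*} [NormedAddCommGroup E] [NormedSpace ℝ E]
    [HasContDiffBump E] [NormedAddCommGroup F] [NormedSpace ℝ F] {f : E → F} {x : E} {n : ℕ∞}
    (hf : ∀ᶠ y in 𝓝 x, ContDiffAt ℝ n f y) :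
    ∃ g : E → F, ContDiff ℝ n g ∧ g =ᶠ[𝓝 x] f := by
  obtain ⟨r, hr, hball⟩ := Metric.eventually_nhds_iff_ball.1 hf
  let χ : ContDiffBump x := ⟨r / 4, r / 2, by linarith, by linarith⟩
  refine ⟨fun y => χ y • f y, contDiff_iff_contDiffAt.2 fun y => ?_, ?_⟩
  · by_cases hy : y ∈ Metric.ball x r
    · exact χ.contDiff.contDiffAt.smul (hball y hy)
    · have hy_supp : y ∉ tsupport χ := by
        rw [χ.tsupport_eq]
        exact fun h => hy (Metric.closedBall_subset_ball (half_lt_self hr) h)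
      have hzero : (fun z => χ z • f z) =ᶠ[𝓝 y] fun _ => 0 :=
        (notMem_tsupport_iff_eventuallyEq.1 hy_supp).mono fun z hz => by simp [hz]
      exact contDiffAt_const.congr_of_eventuallyEq hzero
  · exact χ.eventuallyEq_one.mono fun y hy => by simp [hy]

lemma isBigO_sub_taylorWithinEval {E : Type*} [NormedAddCommGroup E] [NormedSpace ℝ E]
    {f : ℝ → E} {n : ℕ} (hf : ContDiff ℝ (n + 1 : ℕ) f) (a : ℝ) :
    (fun x => f x - taylorWithinEval f n univ a x) =O[𝓝 a] fun x => (x - a) ^ (n + 1) := by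
  have hterm : (fun x => (((n : ℝ) + 1) * n.factorial)⁻¹ • (x - a) ^ (n + 1) •
      iteratedDerivWithin (n + 1) f univ a) =O[𝓝 a] fun x => (x - a) ^ (n + 1) := by
    refine IsBigO.const_smul_left ?_ _
    simpa using (isBigO_refl (fun x : ℝ => (x - a) ^ (n + 1)) (𝓝 a)).smul
      (isBigO_const_const (iteratedDerivWithin (n + 1) f univ a) (one_ne_zero (α := ℝ)) (𝓝 a))
  refine ((taylor_isLittleO_univ hf).isBigO.add hterm).congr_left fun x => ?_
  rw [taylorWithinEval_succ, mul_smul]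
  abel

lemma isInvertible_of_apply_one_ne_zero {𝕜 : Type*} [Field 𝕜] [TopologicalSpace 𝕜]
    [ContinuousMul 𝕜] {A : 𝕜 →L[𝕜] 𝕜} (hA : A 1 ≠ 0) : A.IsInvertible :=
  ⟨ContinuousLinearEquiv.unitsEquivAut 𝕜 (Units.mk0 (A 1) hA), by ext; simp⟩

variable {E F : Type*} [NormedAddCommGroup E] [NormedSpace ℝ E]
  [NormedAddCommGroup F] [NormedSpace ℝ F]

lemma fderiv_comp_inl_eq_comp_inr_of_symm {G : E × E → F} (hsymm : ∀ x y, G (x, y) = G (y, x))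
    (a : E) :
    fderiv ℝ G (a, a) ∘L .inl ℝ E E = fderiv ℝ G (a, a) ∘L .inr ℝ E E := by
  have hswap : G ∘ ContinuousLinearEquiv.prodComm ℝ E E = G := funext fun p => hsymm p.2 p.1
  have hfderiv := (ContinuousLinearEquiv.prodComm ℝ E E).comp_right_fderiv (f := G) (x := (a, a))
  rw [hswap] at hfderiv
  ext x
  simpa using DFunLike.congr_fun hfderiv (x, 0)

lemma exists_contDiff_implicitFunction_of_symm [FiniteDimensional ℝ E] [CompleteSpace F]
    {G : E × E → F} {a : E} (hG : ContDiffAt ℝ ω G (a, a))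
    (hsymm : ∀ x y, G (x, y) = G (y, x))
    (hinv : (fderiv ℝ G (a, a) ∘L .inr ℝ E E).IsInvertible) :
    ∃ ψ : E → E, ContDiff ℝ ∞ ψ ∧ ψ a = a ∧ HasFDerivAt ψ (-.id ℝ E) a ∧
      ∀ᶠ p in 𝓝 (a, a), G p = G (a, a) ↔ ψ p.1 = p.2 := by
  have : CompleteSpace E := FiniteDimensional.complete ℝ E
  have hω : (ω : WithTop ℕ∞) ≠ 0 := by simp
  have hsmooth : ∀ᶠ x in 𝓝 a, ContDiffAt ℝ ∞ (hG.implicitFunction hω hinv) x :=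
    ((hG.contDiffAt_implicitFunction hω hinv).eventually (by simp)).mono fun x hx =>
      hx.of_le le_top
  obtain ⟨ψ, hψ, hψ_eq⟩ := exists_contDiff_eventuallyEq hsmooth
  have hderiv := hG.hasStrictFDerivAt_implicitFunction hω hinv
  rw [fderiv_comp_inl_eq_comp_inr_of_symm hsymm] at hderiv
  have hderiv_id : HasStrictFDerivAt (hG.implicitFunction hω hinv) (-.id ℝ E) a := by
    rwa [← hinv.inverse_comp_self, ← ContinuousLinearMap.neg_comp]
  refine ⟨ψ, hψ, hψ_eq.eq_of_nhds.trans (hG.implicitFunction_apply_self hω hinv),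
    hderiv_id.hasFDerivAt.congr_of_eventuallyEq hψ_eq, ?_⟩
  filter_upwards [hG.eventually_apply_eq_iff_implicitFunction hω hinv,
    continuousAt_fst.eventually hψ_eq] with p hp hp_eq
  rw [hp, hp_eq]

end Calculus

section Topology

variable {X Y : Type*} [TopologicalSpace X] [TopologicalSpace Y]

lemma exists_mem_nhds_closure_inter_eq {D C : Set X} {x : X} (hC : IsClosed C)
    (hDC : ∀ᶠ y in 𝓝 x, y ∈ D → y ∈ C) (hCD : ∀ᶠ y in 𝓝 x, y ∈ C → y ∈ closure D) :
    ∃ U ∈ 𝓝 x, closure D ∩ U = C ∩ U := by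
  have hclosure : ∀ᶠ y in 𝓝 x, y ∈ closure D → y ∈ C := by
    filter_upwards [hDC.eventually_nhds] with y hy hyD
    rw [← hC.closure_eq]
    exact mem_closure_iff_frequently.2 ((mem_closure_iff_frequently.1 hyD).mp hy)
  refine ⟨_, hclosure.and hCD, ?_⟩
  ext y
  exact and_congr_left fun hy => ⟨hy.1, hy.2⟩

lemma eventually_mem_closure_of_eventually_nhdsNE {f : X → Y} {D : Set Y} {x : X}
    [(𝓝[≠] x).NeBot] (hf : ContinuousAt f x) (hD : ∀ᶠ y in 𝓝[≠] x, f y ∈ D) :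
    ∀ᶠ y in 𝓝 x, f y ∈ closure D := by
  rw [← nhdsNE_sup_pure, eventually_sup, eventually_pure]
  exact ⟨hD.mono fun y hy => subset_closure hy,
    mem_closure_of_tendsto (hf.tendsto.mono_left nhdsWithin_le_nhds) hD⟩

end Topology

/-- The set of double points of a map, in its source. -/
def doublePointSet {X Y : Type*} (g : X → Y) : Set X :=
  {p | ∃ q, q ≠ p ∧ g q = g p}

/-- `H` is a divided difference of `h` with respect to its second variable. The value of `H` on
the diagonal `v = w` is left free; it is pinned down by continuity where `H` is continuous. -/
def IsDividedDifference (h : ℝ × ℝ → ℝ) (H : ℝ × ℝ × ℝ → ℝ) : Prop :=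
  ∀ u v w, h (u, w) - h (u, v) = (w - v) * H (u, v, w)

/-- The value of `u` for which `u v + k v³ = u w + k w³`, when `v ≠ w`. -/
def crossing (k v w : ℝ) : ℝ :=
  -k * (v ^ 2 + v * w + w ^ 2)

/-- The equation `H (u, v, w) = 0` with `u` eliminated: its solutions `(v, w)` off the diagonal
are the pairs of second coordinates of double points with the same image. -/
def crossingEquation (k : ℝ) (H : ℝ × ℝ × ℝ → ℝ) (p : ℝ × ℝ) : ℝ :=
  H (crossing k p.1 p.2, p.1, p.2)

lemma crossing_zero_zero (k : ℝ) : crossing k 0 0 = 0 := by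
  simp [crossing]

lemma crossing_comm (k v w : ℝ) : crossing k v w = crossing k w v := by
  unfold crossing
  ring

lemma eventually_forall_of_eq_crossing {k : ℝ} (hk : k ≠ 0) {P : ℝ × ℝ → Prop}
    (hP : ∀ᶠ q in 𝓝 0, P q) :
    ∀ᶠ p : ℝ × ℝ in 𝓝 0, ∀ w, p.1 = crossing k p.2 w → P (p.2, w) := by
  obtain ⟨ε, hε, hball⟩ := Metric.eventually_nhds_iff.1 hP
  have hk' : 0 < |k| := abs_pos.2 hk
  have hu : ∀ᶠ p : ℝ × ℝ in 𝓝 0, |p.1| < |k| * (3 / 4 * ε ^ 2) :=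
    (by fun_prop : Continuous fun p : ℝ × ℝ => |p.1|).continuousAt.eventually_lt_const
      (by simpa using by positivity)
  filter_upwards [hu] with p hp w hcross
  have hsum : p.2 ^ 2 + p.2 * w + w ^ 2 < 3 / 4 * ε ^ 2 := by
    rw [hcross, crossing, abs_mul, abs_neg] at hp
    exact (le_abs_self _).trans_lt (lt_of_mul_lt_mul_left hp hk'.le)
  have hv : |p.2| < ε := abs_lt_of_sq_lt_sq (by nlinarith [sq_nonneg (p.2 + 2 * w)]) hε.le
  have hw : |w| < ε := abs_lt_of_sq_lt_sq (by nlinarith [sq_nonneg (2 * p.2 + w)]) hε.le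
  exact hball (by simpa [Prod.dist_eq] using ⟨hv, hw⟩)

section Curve

variable {k : ℝ} {ψ : ℝ → ℝ}

lemma contDiff_crossing (k : ℝ) {n : WithTop ℕ∞} (hψ : ContDiff ℝ n ψ) :
    ContDiff ℝ n fun v => crossing k v (ψ v) := by
  unfold crossing
  fun_prop

lemma deriv_crossing_eq_zero (k : ℝ) (hψ : DifferentiableAt ℝ ψ 0) (hψ0 : ψ 0 = 0) :
    deriv (fun v => crossing k v (ψ v)) 0 = 0 := by
  have hquad : HasDerivAt (fun v => v ^ 2 + v * ψ v + ψ v ^ 2) 0 0 := by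
    simpa [hψ0] using (((hasDerivAt_id' (0 : ℝ)).fun_pow 2).fun_add
      ((hasDerivAt_id' 0).fun_mul hψ.hasDerivAt)).fun_add (hψ.hasDerivAt.fun_pow 2)
  simpa [crossing] using (hquad.const_mul (-k)).deriv

lemma isBigO_crossing_add_mul_sq (k : ℝ) (hψ : ContDiff ℝ 2 ψ) (hψ0 : ψ 0 = 0)
    (hψ' : HasDerivAt ψ (-1) 0) :
    (fun v => crossing k v (ψ v) + k * v ^ 2) =O[𝓝 0] fun v => v ^ 3 := by
  have hψ_id : ψ =O[𝓝 0] fun v => v := by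
    simpa [hψ0] using hψ'.differentiableAt.isBigO_sub
  have hsum : (fun v => v + ψ v) =O[𝓝 0] fun v => v ^ 2 := by
    simpa [taylorWithinEval_succ, hψ0, hψ'.deriv, add_comm] using
      isBigO_sub_taylorWithinEval (n := 1) hψ 0
  refine ((hψ_id.mul hsum).const_mul_left (-k)).congr (fun v => ?_) fun v => by ring
  unfold crossing
  ring

end Curve

section DoublePoints

variable {k : ℝ} {h : ℝ × ℝ → ℝ} {H : ℝ × ℝ × ℝ → ℝ} {g : ℝ × ℝ → ℝ × ℝ × ℝ} {ψ : ℝ → ℝ}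

lemma IsDividedDifference.symm (hH : IsDividedDifference h H) (u v w : ℝ) :
    H (u, v, w) = H (u, w, v) := by
  rcases eq_or_ne v w with rfl | hvw
  · rfl
  · apply mul_left_cancel₀ (sub_ne_zero.2 hvw)
    linear_combination hH u v w + hH u w v

lemma mem_doublePointSet_iff (hH : IsDividedDifference h H)
    (hg : ∀ p, g p = (p.1, p.1 * p.2 + k * p.2 ^ 3, h p)) {u v : ℝ} :
    (u, v) ∈ doublePointSet g ↔ ∃ w, w ≠ v ∧ u = crossing k v w ∧ H (u, v, w) = 0 := by
  have hcrossing (w : ℝ) : u * w + k * w ^ 3 - (u * v + k * v ^ 3) =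
      (w - v) * (u - crossing k v w) := by
    unfold crossing
    ring
  have hiff {w : ℝ} (hw : w ≠ v) :
      g (u, w) = g (u, v) ↔ u = crossing k v w ∧ H (u, v, w) = 0 := by
    have hwv : w - v ≠ 0 := sub_ne_zero.2 hw
    rw [hg, hg, Prod.mk.injEq, Prod.mk.injEq, ← sub_eq_zero (a := u * w + _), hcrossing,
      ← sub_eq_zero (a := h _), hH]
    simp [hwv, sub_eq_zero]
  constructor
  · rintro ⟨⟨u', w⟩, hne, heq⟩
    obtain rfl : u' = u := by simpa [hg] using congrArg Prod.fst heq
    have hw : w ≠ v := fun hwv => hne (by rw [hwv])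
    exact ⟨w, hw, (hiff hw).1 heq⟩
  · rintro ⟨w, hw, heq⟩
    exact ⟨(u, w), fun h => hw (congrArg Prod.snd h), (hiff hw).2 heq⟩

lemma contDiffAt_crossingEquation {n : WithTop ℕ∞} (k : ℝ) (hH : ContDiffAt ℝ n H 0) :
    ContDiffAt ℝ n (crossingEquation k H) (0, 0) := by
  have hpoint : ((crossing k 0 0, 0, 0) : ℝ × ℝ × ℝ) = 0 := by simp [crossing_zero_zero]
  have hsubst : ContDiff ℝ n fun p : ℝ × ℝ => (crossing k p.1 p.2, p.1, p.2) := by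
    unfold crossing
    fun_prop
  exact ContDiffAt.comp (g := H) (0, 0) (hpoint ▸ hH) hsubst.contDiffAt

lemma crossingEquation_symm (k : ℝ) (hH : IsDividedDifference h H) (v w : ℝ) :
    crossingEquation k H (v, w) = crossingEquation k H (w, v) := by
  simp only [crossingEquation, crossing_comm k v w, hH.symm _ v w]

lemma hasDerivAt_crossingEquation (k : ℝ) (hH : DifferentiableAt ℝ H 0) :
    HasDerivAt (fun w => crossingEquation k H (0, w)) (deriv (fun w => H (0, 0, w)) 0) 0 := by
  have hchain {c : ℝ → ℝ} (hc0 : c 0 = 0) (hc : HasDerivAt c 0 0) :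
      HasDerivAt (fun w => H (c w, 0, w)) (fderiv ℝ H 0 (0, 0, 1)) 0 := by
    have hpoint : ((c 0, 0, 0) : ℝ × ℝ × ℝ) = 0 := by simp [hc0]
    exact HasFDerivAt.comp_hasDerivAt 0 (hpoint ▸ hH.hasFDerivAt)
      (hc.prodMk ((hasDerivAt_const 0 0).prodMk (hasDerivAt_id' 0)))
  have hcrossing : HasDerivAt (fun w => crossing k 0 w) 0 0 := by
    simpa [crossing] using (hasDerivAt_pow 2 (0 : ℝ)).const_mul (-k)
  rw [(hchain (c := fun _ => 0) rfl (hasDerivAt_const 0 0)).deriv]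
  exact hchain (crossing_zero_zero k) hcrossing

lemma isInvertible_fderiv_crossingEquation (k : ℝ) (hH : DifferentiableAt ℝ H 0)
    (hG : DifferentiableAt ℝ (crossingEquation k H) (0, 0))
    (hH' : deriv (fun w => H (0, 0, w)) 0 ≠ 0) :
    (fderiv ℝ (crossingEquation k H) (0, 0) ∘L .inr ℝ ℝ ℝ).IsInvertible := by
  apply isInvertible_of_apply_one_ne_zero
  have hslice : HasDerivAt (fun w => crossingEquation k H (0, w))
      (fderiv ℝ (crossingEquation k H) (0, 0) (0, 1)) 0 :=
    hG.hasFDerivAt.comp_hasDerivAt 0 ((hasDerivAt_const 0 0).prodMk (hasDerivAt_id' 0))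
  simpa [hslice.unique (hasDerivAt_crossingEquation k hH)] using hH'

lemma exists_contDiff_crossingEquation_eq_zero_iff (k : ℝ) (hH : IsDividedDifference h H)
    (hsmooth : ContDiffAt ℝ ω H 0) (hH0 : H 0 = 0)
    (hH' : deriv (fun w => H (0, 0, w)) 0 ≠ 0) :
    ∃ ψ : ℝ → ℝ, ContDiff ℝ ∞ ψ ∧ ψ 0 = 0 ∧ HasDerivAt ψ (-1) 0 ∧
      ∀ᶠ p in 𝓝 (0 : ℝ × ℝ), crossingEquation k H p = 0 ↔ ψ p.1 = p.2 := by
  have hG := contDiffAt_crossingEquation k hsmooth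
  have hinv := isInvertible_fderiv_crossingEquation k (hsmooth.differentiableAt (by simp))
    (hG.differentiableAt (by simp)) hH'
  obtain ⟨ψ, hψ, hψ0, hψ', hiff⟩ :=
    exists_contDiff_implicitFunction_of_symm hG (crossingEquation_symm k hH) hinv
  have hG0 : crossingEquation k H (0, 0) = 0 := by
    rw [crossingEquation, crossing_zero_zero]
    exact hH0
  rw [hG0] at hiff
  exact ⟨ψ, hψ, hψ0, by simpa using hψ'.hasDerivAt, hiff⟩

lemma eventually_eq_crossing_of_mem_doublePointSet (hH : IsDividedDifference h H)
    (hg : ∀ p, g p = (p.1, p.1 * p.2 + k * p.2 ^ 3, h p))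
    (hψ : ∀ᶠ p in 𝓝 (0 : ℝ × ℝ), crossingEquation k H p = 0 → ψ p.1 = p.2) :
    ∀ᶠ p in 𝓝 (0 : ℝ × ℝ), p ∈ doublePointSet g → p.1 = crossing k p.2 (ψ p.2) := by
  rcases eq_or_ne k 0 with rfl | hk
  · -- For `k = 0` the second parameter `w` need not be small, but `u = 0` whatever it is.
    refine .of_forall fun p hp => ?_
    obtain ⟨w, -, hu, -⟩ := (mem_doublePointSet_iff hH hg).1 hp
    simpa [crossing] using hu
  · filter_upwards [eventually_forall_of_eq_crossing hk hψ] with p hp hmem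
    obtain ⟨w, -, hu, hzero⟩ := (mem_doublePointSet_iff hH hg).1 hmem
    have hw : ψ p.2 = w := hp w hu (by rwa [crossingEquation, ← hu])
    rwa [hw]

lemma eventually_crossing_mem_doublePointSet (hH : IsDividedDifference h H)
    (hg : ∀ p, g p = (p.1, p.1 * p.2 + k * p.2 ^ 3, h p)) (hψ0 : ψ 0 = 0)
    (hψ' : HasDerivAt ψ (-1) 0)
    (hψ : ∀ᶠ p in 𝓝 (0 : ℝ × ℝ), ψ p.1 = p.2 → crossingEquation k H p = 0) :
    ∀ᶠ v in 𝓝[≠] (0 : ℝ), (crossing k v (ψ v), v) ∈ doublePointSet g := by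
  have hne : ∀ᶠ v in 𝓝[≠] (0 : ℝ), ψ v - v ≠ 0 :=
    (hψ'.sub (hasDerivAt_id 0)).eventually_ne (by norm_num)
  have hgraph : Tendsto (fun v => (v, ψ v)) (𝓝[≠] 0) (𝓝 (0 : ℝ × ℝ)) := by
    have : ContinuousAt (fun v => (v, ψ v)) 0 := continuousAt_id.prodMk hψ'.continuousAt
    rw [ContinuousAt, hψ0] at this
    exact this.mono_left nhdsWithin_le_nhds
  filter_upwards [hne, hgraph.eventually hψ] with v hv hzero
  exact (mem_doublePointSet_iff hH hg).2 ⟨ψ v, sub_ne_zero.1 hv, rfl, hzero rfl⟩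

end DoublePoints

theorem stmt10_general {k : ℝ} {h : ℝ × ℝ → ℝ} {H : ℝ × ℝ × ℝ → ℝ}
    (hH : IsDividedDifference h H) (hsmooth : ContDiffAt ℝ ω H 0) (hH0 : H 0 = 0)
    (hH' : deriv (fun w => H (0, 0, w)) 0 ≠ 0) {g : ℝ × ℝ → ℝ × ℝ × ℝ}
    (hg : ∀ p, g p = (p.1, p.1 * p.2 + k * p.2 ^ 3, h p)) :
    ∃ γ : ℝ → ℝ, ContDiff ℝ ∞ γ ∧ γ 0 = 0 ∧ deriv γ 0 = 0 ∧
      ((fun v => γ v + k * v ^ 2) =O[𝓝 0] fun v => v ^ 3) ∧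
      ∃ U ∈ 𝓝 (0 : ℝ × ℝ), closure (doublePointSet g) ∩ U = {p | p.1 = γ p.2} ∩ U := by
  obtain ⟨ψ, hψ, hψ0, hψ', hiff⟩ :=
    exists_contDiff_crossingEquation_eq_zero_iff k hH hsmooth hH0 hH'
  have hγ : ContDiff ℝ ∞ fun v => crossing k v (ψ v) := contDiff_crossing k hψ
  refine ⟨fun v => crossing k v (ψ v), hγ, by simp [hψ0, crossing_zero_zero],
    deriv_crossing_eq_zero k hψ'.differentiableAt hψ0,
    isBigO_crossing_add_mul_sq k (contDiff_infty.1 hψ 2) hψ0 hψ',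
    exists_mem_nhds_closure_inter_eq
      (isClosed_eq continuous_fst (hγ.continuous.comp continuous_snd))
      (eventually_eq_crossing_of_mem_doublePointSet hH hg (hiff.mono fun _ => Iff.mp)) ?_⟩
  have hclosure := eventually_mem_closure_of_eventually_nhdsNE
    (hγ.continuous.prodMk continuous_id).continuousAt
    (eventually_crossing_mem_doublePointSet hH hg hψ0 hψ' (hiff.mono fun _ => Iff.mpr))
  filter_upwards [continuousAt_snd.eventually hclosure] with p hp hmem
  rwa [← show p.1 = crossing k p.2 (ψ p.2) from hmem] at hp

/-- The double point locus of the cubic normal form of a Whitney umbrella is, near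
the origin, a smooth curve `u = −(b₃/6)v² + O(v³)`; in particular its tangent
direction at the origin is the v-axis. -/
theorem stmt10 (b3 a20 a11 a02 a30 a21 a12 a03 : ℝ) (ha02 : a02 ≠ 0)
    (g : ℝ × ℝ → ℝ × ℝ × ℝ)
    (hg : ∀ p : ℝ × ℝ, g p =
      (p.1, p.1 * p.2 + b3 / 6 * p.2 ^ 3,
        a20 / 2 * p.1 ^ 2 + a11 * p.1 * p.2 + a02 / 2 * p.2 ^ 2 +
          a30 / 6 * p.1 ^ 3 + a21 / 2 * p.1 ^ 2 * p.2 + a12 / 2 * p.1 * p.2 ^ 2 +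
          a03 / 6 * p.2 ^ 3)) :
    ∃ γ₁ : ℝ → ℝ, ContDiff ℝ (⊤ : ℕ∞) γ₁ ∧ γ₁ 0 = 0 ∧ deriv γ₁ 0 = 0 ∧
      ((fun v => γ₁ v + b3 / 6 * v ^ 2) =O[nhds 0] fun v => v ^ 3) ∧
      ∃ U ∈ nhds (0 : ℝ × ℝ),
        closure {p : ℝ × ℝ | ∃ q : ℝ × ℝ, q ≠ p ∧ g q = g p} ∩ U =
          {p : ℝ × ℝ | p.1 = γ₁ p.2} ∩ U := by
  refine stmt10_general (H := fun x => a11 * x.1 + a02 / 2 * (x.2.1 + x.2.2) +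
    a21 / 2 * x.1 ^ 2 + a12 / 2 * x.1 * (x.2.1 + x.2.2) +
    a03 / 6 * (x.2.1 ^ 2 + x.2.1 * x.2.2 + x.2.2 ^ 2)) (fun u v w => by ring)
    (ContDiff.contDiffAt (by fun_prop)) (by simp) ?_ hg
  have hderiv := ((hasDerivAt_id' (0 : ℝ)).const_mul (a02 / 2)).fun_add
    ((hasDerivAt_pow 2 (0 : ℝ)).const_mul (a03 / 6))
  simpa [hderiv.deriv] using ha02
end

section
/- Every Whitney umbrella germ can be brought to normal form: if g : (ℝ²,0) → (ℝ³,0) is A-equivalent to (u,v) ↦ (u, uv, v²), then there exist T ∈ SO(3) and a diffeomorphism germ φ of (ℝ²,0) such that the 3-jet of T∘g∘φ is (u, uv + (b₃/6)v³, Σ_{i+j=2,3} (a_{ij}/(i!j!)) u^i v^j) with a₀₂ ≠ 0, for some real constants b₃, a_{ij}. -/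
open Asymptotics

open Filter Topology Matrix
open scoped ContDiff

/-!
Only the 2-jet of `φ₂` matters for the 2-jet of the umbrella, and a rotation brings the matrix of
`dφ₂(0)` to a shape in which `f = T ∘ φ₂ ∘ W` has components `a u + O(2)`, `b₀ u² + b₁ u v + O(3)`
and `c₀ u² + c₁ u v + c₂ v² + O(3)` with `a`, `b₁`, `c₂` nonzero. A linear change of `(u, v)` makes
`a = b₁ = 1` and `b₀ = 0`. A coordinate change tangent to the identity turns the first component
into `u + O(4)`. The cubic terms of the second component other than `v³` then have the form
`u q(u, v)`, so `v ↦ v - q` absorbs them into `u v`. Coordinate changes tangent to the identity do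
not affect the quadratic terms, hence `a₀₂ = 2 c₂` stays nonzero.
-/

section VanishingOrder

variable {E F G : Type*} [NormedAddCommGroup E] [NormedAddCommGroup F] [NormedAddCommGroup G]

/-- A map vanishes to order `n` at the origin if it is `O(‖p‖ ^ n)`. For smooth maps this says that
the `(n - 1)`-jet is zero, so it serves to compare jets without naming them. -/
abbrev VanishesToOrder (n : ℕ) (f : E → F) : Prop :=
  f =O[𝓝 0] fun p : E ↦ ‖p‖ ^ n

theorem VanishesToOrder.mono {m n : ℕ} {f : E → F} (hf : VanishesToOrder n f) (hmn : m ≤ n) :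
    VanishesToOrder m f := by
  rcases hmn.eq_or_lt with rfl | hlt
  · exact hf
  · exact hf.trans (isLittleO_norm_pow_norm_pow hlt).isBigO

theorem VanishesToOrder.mul {R : Type*} [NormedRing R] {m n : ℕ} {f g : E → R}
    (hf : VanishesToOrder m f) (hg : VanishesToOrder n g) :
    VanishesToOrder (m + n) fun p ↦ f p * g p :=
  (IsBigO.mul hf hg).congr_right fun _ ↦ (pow_add ..).symm

theorem vanishesToOrder_one_iff {f : E → F} :
    VanishesToOrder 1 f ↔ f =O[𝓝 0] fun p : E ↦ p := by
  simpa only [VanishesToOrder, pow_one] using isBigO_norm_right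

theorem vanishesToOrder_id : VanishesToOrder 1 fun p : E ↦ p :=
  vanishesToOrder_one_iff.mpr (isBigO_refl ..)

theorem VanishesToOrder.apply_zero {n : ℕ} {f : E → F} (hf : VanishesToOrder n f) (hn : n ≠ 0) :
    f 0 = 0 :=
  IsBigO.eq_zero_of_norm_pow (by simpa using hf) hn

theorem VanishesToOrder.tendsto_zero {f : E → F} (hf : VanishesToOrder 1 f) :
    Tendsto f (𝓝 0) (𝓝 0) :=
  (vanishesToOrder_one_iff.mp hf).trans_tendsto tendsto_id

theorem VanishesToOrder.comp {n : ℕ} {f : F → G} {ψ : E → F} (hf : VanishesToOrder n f)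
    (hψ : VanishesToOrder 1 ψ) : VanishesToOrder n fun p ↦ f (ψ p) := by
  have hψn : (fun p ↦ ‖ψ p‖ ^ n) =O[𝓝 0] fun p ↦ (‖p‖ ^ 1) ^ n := hψ.norm_left.pow n
  simp only [pow_one] at hψn
  exact (hf.comp_tendsto hψ.tendsto_zero).trans hψn

theorem vanishesToOrder_monomial (i j : ℕ) :
    VanishesToOrder (i + j) fun p : ℝ × ℝ ↦ p.1 ^ i * p.2 ^ j := by
  refine .mul ?_ ?_
  · simpa using (isBigO_fst_prod' (f' := fun p : ℝ × ℝ ↦ p)).norm_right.pow i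
  · simpa using (isBigO_snd_prod' (f' := fun p : ℝ × ℝ ↦ p)).norm_right.pow j

end VanishingOrder

section SmoothVanishingOrder

variable {E F : Type*} [NormedAddCommGroup E] [NormedSpace ℝ E] [NormedAddCommGroup F]
  [NormedSpace ℝ F]

theorem vanishesToOrder_one_of_differentiableAt {f : E → F} (hf : DifferentiableAt ℝ f 0)
    (hf0 : f 0 = 0) : VanishesToOrder 1 f := by
  simpa [vanishesToOrder_one_iff, hf0] using hf.hasFDerivAt.isBigO_sub

theorem VanishesToOrder.hasFDerivAt_zero {f : E → F} (hf : VanishesToOrder 2 f) :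
    HasFDerivAt f (0 : E →L[ℝ] F) 0 :=
  IsBigO.hasFDerivAt (n := 2) (by simpa using hf) one_lt_two

protected theorem VanishesToOrder.fderiv {f : E → F} (hf : VanishesToOrder 2 f)
    (hfs : ContDiff ℝ 2 f) : VanishesToOrder 1 (fderiv ℝ f) :=
  vanishesToOrder_one_of_differentiableAt
    ((hfs.fderiv_right (m := 1) (by norm_num)).differentiable (by simp)).differentiableAt
    hf.hasFDerivAt_zero.fderiv

theorem VanishesToOrder.sub_isBigO {f : E → F} (hf : VanishesToOrder 2 f) (hfs : ContDiff ℝ 2 f) :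
    (fun z : E × E ↦ f z.1 - f z.2) =O[𝓝 0] fun z ↦ ‖z‖ * ‖z.1 - z.2‖ := by
  obtain ⟨C, hC⟩ := (hf.fderiv hfs).bound
  obtain ⟨r, hr, hball⟩ := Metric.eventually_nhds_iff_ball.mp hC
  refine .of_bound |C| ?_
  filter_upwards [Metric.ball_mem_nhds (0 : E × E) hr] with z hz
  rw [mem_ball_zero_iff] at hz
  have hderiv : ∀ x ∈ Metric.closedBall (0 : E) ‖z‖, ‖fderiv ℝ f x‖ ≤ |C| * ‖z‖ := by
    intro x hx
    rw [mem_closedBall_zero_iff] at hx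
    calc ‖fderiv ℝ f x‖ ≤ C * ‖x‖ := by
          simpa using hball x (by simpa using hx.trans_lt hz)
      _ ≤ |C| * ‖z‖ := by gcongr; exact le_abs_self C
  have hmvt := (convex_closedBall (0 : E) ‖z‖).norm_image_sub_le_of_norm_fderiv_le
    (fun x _ ↦ (hfs.differentiable (by simp)).differentiableAt) hderiv
    (mem_closedBall_zero_iff.mpr (norm_snd_le z)) (mem_closedBall_zero_iff.mpr (norm_fst_le z))
  simpa [mul_assoc] using hmvt

theorem VanishesToOrder.comp_sub_comp {D : Type*} [NormedAddCommGroup D] {k : ℕ} {f : E → F}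
    {ψ χ : D → E} (hf : VanishesToOrder 2 f) (hfs : ContDiff ℝ 2 f) (hψ : VanishesToOrder 1 ψ)
    (hχ : VanishesToOrder 1 χ) (hψχ : VanishesToOrder k fun p ↦ ψ p - χ p) :
    VanishesToOrder (k + 1) fun p ↦ f (ψ p) - f (χ p) := by
  have hpair : VanishesToOrder 1 fun p ↦ (ψ p, χ p) := hψ.prod_left hχ
  refine ((hf.sub_isBigO hfs).comp_tendsto hpair.tendsto_zero).trans ?_
  exact (hpair.norm_left.mul hψχ.norm_left).congr_right fun p ↦ by ring

theorem taylor_vanishesToOrder [CompleteSpace F] {n : ℕ} {f : E → F} (hf : ContDiff ℝ (n + 1) f) :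
    VanishesToOrder (n + 1) fun y ↦
      f y - ∑ k ∈ Finset.range (n + 1), (k.factorial : ℝ)⁻¹ • iteratedFDeriv ℝ k f 0 fun _ ↦ y := by
  have hcont : Continuous (iteratedFDeriv ℝ (n + 1) f) :=
    hf.continuous_iteratedFDeriv (by norm_cast)
  obtain ⟨r, hr, hbound⟩ := Metric.eventually_nhds_iff_ball.mp
    (hcont.norm.continuousAt.eventually_lt_const (lt_add_one ‖iteratedFDeriv ℝ (n + 1) f 0‖))
  set C := ‖iteratedFDeriv ℝ (n + 1) f 0‖ + 1
  have hint : VanishesToOrder (n + 1) fun y ↦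
      ∫ t in (0 : ℝ)..1, (1 - t) ^ n • iteratedFDeriv ℝ (n + 1) f (t • y) fun _ ↦ y := by
    refine .of_bound C ?_
    filter_upwards [Metric.ball_mem_nhds (0 : E) hr] with y hy
    suffices ∀ t ∈ Set.uIoc (0 : ℝ) 1,
        ‖(1 - t) ^ n • iteratedFDeriv ℝ (n + 1) f (t • y) fun _ ↦ y‖ ≤ C * ‖y‖ ^ (n + 1) by
      simpa using intervalIntegral.norm_integral_le_of_norm_le_const this
    intro t ht
    rw [Set.uIoc_of_le zero_le_one] at ht
    have hty : t • y ∈ Metric.ball (0 : E) r := by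
      rw [mem_ball_zero_iff] at hy ⊢
      rw [norm_smul, Real.norm_of_nonneg ht.1.le]
      exact (mul_le_of_le_one_left (norm_nonneg y) ht.2).trans_lt hy
    have hpow : ‖(1 - t) ^ n‖ ≤ 1 := by
      rw [norm_pow, Real.norm_of_nonneg (sub_nonneg.mpr ht.2)]
      exact pow_le_one₀ (sub_nonneg.mpr ht.2) (by linarith [ht.1])
    calc ‖(1 - t) ^ n • iteratedFDeriv ℝ (n + 1) f (t • y) fun _ ↦ y‖
        ≤ 1 * ‖iteratedFDeriv ℝ (n + 1) f (t • y) fun _ ↦ y‖ := by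
          rw [norm_smul]; gcongr
      _ ≤ C * ‖y‖ ^ (n + 1) := by
          rw [one_mul]
          simpa using ContinuousMultilinearMap.le_of_opNorm_le (hbound _ hty).le (fun _ ↦ y)
  refine (hint.const_smul_left (n.factorial : ℝ)⁻¹).congr_left fun y ↦ ?_
  have htaylor := map_add_eq_sum_add_integral_iteratedFDeriv (f := f) (x := 0) (y := y) (n := n)
    fun _ _ ↦ hf.contDiffAt
  simp only [zero_add] at htaylor
  rw [htaylor, add_sub_cancel_left, Pi.smul_apply]

theorem VanishesToOrder.sub_leadingForm [CompleteSpace F] {n : ℕ} {f : E → F}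
    (hf : VanishesToOrder n f) (hfs : ContDiff ℝ (n + 1) f) :
    VanishesToOrder (n + 1) fun y ↦
      f y - (n.factorial : ℝ)⁻¹ • iteratedFDeriv ℝ n f 0 fun _ ↦ y := by
  induction n using Nat.strong_induction_on with
  | h n ih =>
    have hlow : ∀ k < n, ∀ y : E, (iteratedFDeriv ℝ k f 0 fun _ ↦ y) = 0 := by
      intro k hk
      have hform := (hf.mono hk).sub
        (ih k hk (hf.mono hk.le) (hfs.of_le (by norm_cast; lia)))
      refine IsBigO.continuousMultilinearMap_apply_eq_zero
        ((hform.const_smul_left (k.factorial : ℝ)).congr_left fun y ↦ ?_)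
      have : (k.factorial : ℝ) ≠ 0 := by positivity
      simp [smul_smul, this]
    refine (taylor_vanishesToOrder hfs).congr_left fun y ↦ ?_
    rw [Finset.sum_range_succ, Finset.sum_eq_zero fun k hk ↦ ?_, zero_add]
    rw [hlow k (Finset.mem_range.mp hk), smul_zero]

end SmoothVanishingOrder

section DiffeoGerm

variable {E : Type*} [NormedAddCommGroup E] [NormedSpace ℝ E]

/-- A globally defined smooth map representing a diffeomorphism germ at the origin. This is meant
for finite-dimensional `E`: otherwise `LinearMap.det` is `1` and the last condition is void. -/
structure IsDiffeoGerm (ψ : E → E) : Prop where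
  contDiff : ContDiff ℝ ∞ ψ
  map_zero : ψ 0 = 0
  det_fderiv_ne_zero : LinearMap.det (fderiv ℝ ψ 0 : E →ₗ[ℝ] E) ≠ 0

theorem IsDiffeoGerm.comp {ψ χ : E → E} (hψ : IsDiffeoGerm ψ) (hχ : IsDiffeoGerm χ) :
    IsDiffeoGerm fun p ↦ ψ (χ p) where
  contDiff := hψ.contDiff.comp hχ.contDiff
  map_zero := by rw [hχ.map_zero, hψ.map_zero]
  det_fderiv_ne_zero := by
    have hψd : DifferentiableAt ℝ ψ (χ 0) := (hψ.contDiff.differentiable (by simp)).differentiableAt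
    have hχd : DifferentiableAt ℝ χ 0 := (hχ.contDiff.differentiable (by simp)).differentiableAt
    rw [fderiv_fun_comp 0 hψd hχd, hχ.map_zero, ContinuousLinearMap.toLinearMap_comp,
      LinearMap.det_comp]
    exact mul_ne_zero hψ.det_fderiv_ne_zero hχ.det_fderiv_ne_zero

theorem isDiffeoGerm_continuousLinearMap {L : E →L[ℝ] E} (hL : LinearMap.det (L : E →ₗ[ℝ] E) ≠ 0) :
    IsDiffeoGerm L where
  contDiff := L.contDiff
  map_zero := L.map_zero
  det_fderiv_ne_zero := by rwa [L.fderiv]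

/-- A smooth map whose 1-jet at the origin is the identity. The normalization steps use such maps
because precomposing with them only changes terms of higher order. -/
structure IsTangentToId (ψ : E → E) : Prop where
  contDiff : ContDiff ℝ ∞ ψ
  sub_id : VanishesToOrder 2 fun p ↦ ψ p - p

namespace IsTangentToId

variable {ψ χ : E → E}

theorem vanishesToOrder_one (hψ : IsTangentToId ψ) : VanishesToOrder 1 ψ :=
  ((hψ.sub_id.mono one_le_two).add vanishesToOrder_id).congr_left fun p ↦ sub_add_cancel (ψ p) p

theorem isDiffeoGerm (hψ : IsTangentToId ψ) : IsDiffeoGerm ψ where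
  contDiff := hψ.contDiff
  map_zero := hψ.vanishesToOrder_one.apply_zero one_ne_zero
  det_fderiv_ne_zero := by
    have hderiv : HasFDerivAt ψ (.id ℝ E) 0 := by
      simpa using hψ.sub_id.hasFDerivAt_zero.fun_add (hasFDerivAt_id 0)
    simp [hderiv.fderiv]

protected theorem id : IsTangentToId fun p : E ↦ p where
  contDiff := contDiff_id
  sub_id := by simpa using isBigO_zero _ _

protected theorem comp (hψ : IsTangentToId ψ) (hχ : IsTangentToId χ) :
    IsTangentToId fun p ↦ ψ (χ p) where
  contDiff := hψ.contDiff.comp hχ.contDiff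
  sub_id := by simpa using (hψ.sub_id.comp hχ.vanishesToOrder_one).add hχ.sub_id

theorem comp_sub {F : Type*} [NormedAddCommGroup F] [NormedSpace ℝ F] {f : E → F}
    (hψ : IsTangentToId ψ) (hf : VanishesToOrder 2 f) (hfs : ContDiff ℝ 2 f) :
    VanishesToOrder 3 fun p ↦ f (ψ p) - f p :=
  hf.comp_sub_comp hfs hψ.vanishesToOrder_one vanishesToOrder_id hψ.sub_id

-- Picard iteration `χ ↦ id - (ψ - id) ∘ χ`: each step gains one order.
theorem exists_comp_sub_id (hψ : IsTangentToId ψ) (n : ℕ) :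
    ∃ χ : E → E, IsTangentToId χ ∧ VanishesToOrder n fun p ↦ ψ (χ p) - p := by
  induction n with
  | zero => exact ⟨_, .id, hψ.sub_id.mono (Nat.zero_le 2)⟩
  | succ n ih =>
    obtain ⟨χ, hχ, hn⟩ := ih
    have hRs : ContDiff ℝ ∞ fun p ↦ ψ p - p := hψ.contDiff.sub contDiff_id
    have hχ' : IsTangentToId fun p ↦ p - (ψ (χ p) - χ p) :=
      { contDiff := contDiff_id.sub (hRs.comp hχ.contDiff)
        sub_id := by
          simpa using! (hψ.sub_id.comp hχ.vanishesToOrder_one).neg_left }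
    have hstep : VanishesToOrder n fun p ↦ p - (ψ (χ p) - χ p) - χ p :=
      hn.symm.congr_left fun p ↦ by abel
    exact ⟨_, hχ', (hψ.sub_id.comp_sub_comp (contDiff_infty.mp hRs 2) hχ'.vanishesToOrder_one
      hχ.vanishesToOrder_one hstep).congr_left fun p ↦ by abel⟩

end IsTangentToId

end DiffeoGerm

section BinaryForm

theorem exists_multilinear_diag_eq_sum_monomial {n : ℕ} (D : (ℝ × ℝ) [×n]→L[ℝ] ℝ) :
    ∃ c : ℕ → ℝ, ∀ p : ℝ × ℝ,
      (D fun _ ↦ p) = ∑ k ∈ Finset.range (n + 1), c k * (p.1 ^ k * p.2 ^ (n - k)) := by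
  let e : Finset (Fin n) → Fin n → ℝ × ℝ := fun s ↦ s.piecewise (fun _ ↦ (1, 0)) fun _ ↦ (0, 1)
  refine ⟨fun k ↦ ∑ s with s.card = k, D (e s), fun p ↦ ?_⟩
  have hsplit : (fun _ : Fin n ↦ p) = (fun _ ↦ (p.1, 0)) + fun _ ↦ (0, p.2) := by
    ext <;> simp
  have hterm : ∀ s : Finset (Fin n), D (s.piecewise (fun _ ↦ (p.1, 0)) fun _ ↦ (0, p.2)) =
      p.1 ^ s.card * p.2 ^ (n - s.card) * D (e s) := by
    intro s
    have hsmul : s.piecewise (fun _ ↦ ((p.1, 0) : ℝ × ℝ)) (fun _ ↦ (0, p.2)) =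
        fun i ↦ s.piecewise (fun _ ↦ p.1) (fun _ ↦ p.2) i • e s i := by
      ext i <;> by_cases hi : i ∈ s <;> simp [e, hi]
    rw [hsmul, D.map_smul_univ, Finset.prod_piecewise, smul_eq_mul]
    simp [← Finset.compl_eq_univ_sdiff, Finset.card_compl]
  rw [hsplit, D.map_add_univ, ← Finset.sum_fiberwise_of_maps_to (t := Finset.range (n + 1))
    (g := Finset.card) fun s _ ↦ Finset.mem_range_succ_iff.mpr (card_finset_fin_le s)]
  refine Finset.sum_congr rfl fun k _ ↦ ?_
  rw [Finset.sum_mul]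
  refine Finset.sum_congr rfl fun s hs ↦ ?_
  rw [hterm, (Finset.mem_filter.mp hs).2, mul_comm]

theorem VanishesToOrder.exists_binaryForm {n : ℕ} {f : ℝ × ℝ → ℝ} (hf : VanishesToOrder n f)
    (hfs : ContDiff ℝ (n + 1) f) :
    ∃ c : ℕ → ℝ, VanishesToOrder (n + 1) fun p ↦
      f p - ∑ k ∈ Finset.range (n + 1), c k * (p.1 ^ k * p.2 ^ (n - k)) := by
  obtain ⟨c, hc⟩ :=
    exists_multilinear_diag_eq_sum_monomial ((n.factorial : ℝ)⁻¹ • iteratedFDeriv ℝ n f 0)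
  exact ⟨c, (hf.sub_leadingForm hfs).congr_left fun p ↦ by rw [← hc]; rfl⟩

end BinaryForm

section Rotation

theorem exists_smul_dotProduct_self_eq_one {n : Type*} [Fintype n] {v : n → ℝ} (hv : v ≠ 0) :
    ∃ r : ℝ, (r • v) ⬝ᵥ (r • v) = 1 := by
  have hpos : 0 < v ⬝ᵥ v := by
    simpa using dotProduct_star_self_pos_iff.mpr hv
  refine ⟨(√(v ⬝ᵥ v))⁻¹, ?_⟩
  rw [smul_dotProduct, dotProduct_smul, smul_smul, ← mul_inv, Real.mul_self_sqrt hpos.le,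
    smul_eq_mul, inv_mul_cancel₀ hpos.ne']

theorem of_cross_mem_specialOrthogonalGroup {v w : Fin 3 → ℝ} (hv : v ⬝ᵥ v = 1) (hw : w ⬝ᵥ w = 1)
    (hvw : v ⬝ᵥ w = 0) : of ![v, w, v ⨯₃ w] ∈ specialOrthogonalGroup (Fin 3) ℝ := by
  have hwv : w ⬝ᵥ v = 0 := by rw [dotProduct_comm, hvw]
  have hcross : v ⨯₃ w ⬝ᵥ v ⨯₃ w = 1 := by rw [cross_dot_cross, hv, hw, hvw, hwv]; norm_num
  rw [mem_specialOrthogonalGroup_iff, mem_orthogonalGroup_iff]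
  constructor
  · ext i j
    change ![v, w, v ⨯₃ w] i ⬝ᵥ ![v, w, v ⨯₃ w] j = _
    fin_cases i <;> fin_cases j <;>
      simp [hv, hw, hvw, hwv, hcross, dotProduct_comm (v ⨯₃ w)]
  · calc det ![v, w, v ⨯₃ w] = v ⬝ᵥ w ⨯₃ (v ⨯₃ w) := (triple_product_eq_det ..).symm
      _ = v ⨯₃ w ⬝ᵥ v ⨯₃ w := by rw [triple_product_permutation, triple_product_permutation]
      _ = 1 := hcross

theorem exists_rotation_mulVec_eq_zero {v w : Fin 3 → ℝ} (hvw : v ⨯₃ w ≠ 0) :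
    ∃ T ∈ specialOrthogonalGroup (Fin 3) ℝ,
      (T *ᵥ v) 1 = 0 ∧ (T *ᵥ v) 2 = 0 ∧ (T *ᵥ w) 1 = 0 := by
  have hv : v ≠ 0 := by rintro rfl; simp at hvw
  obtain ⟨r, hr⟩ := exists_smul_dotProduct_self_eq_one hv
  obtain ⟨s, hs⟩ := exists_smul_dotProduct_self_eq_one hvw
  refine ⟨_, of_cross_mem_specialOrthogonalGroup hr hs ?_, ?_, ?_, ?_⟩
  · rw [smul_dotProduct, dotProduct_smul, dot_self_cross, smul_zero, smul_zero]
  · change (s • v ⨯₃ w) ⬝ᵥ v = 0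
    rw [smul_dotProduct, dotProduct_comm, dot_self_cross, smul_zero]
  · change ((r • v) ⨯₃ (s • v ⨯₃ w)) ⬝ᵥ v = 0
    rw [map_smul, map_smul, LinearMap.smul_apply, smul_dotProduct, smul_dotProduct,
      dotProduct_comm, dot_self_cross, smul_zero, smul_zero]
  · change (s • v ⨯₃ w) ⬝ᵥ w = 0
    rw [smul_dotProduct, dotProduct_comm, dot_cross_self, smul_zero]

theorem cross_col_ne_zero {R : Type*} [CommRing R] {M : Matrix (Fin 3) (Fin 3) R} (hM : M.det ≠ 0) :
    M.col 0 ⨯₃ M.col 2 ≠ 0 := by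
  intro hcross
  apply hM
  calc M.det = det ![M.col 0, M.col 1, M.col 2] := by
        rw [← det_transpose]; congr 1; ext i j; fin_cases i <;> rfl
    _ = M.col 1 ⬝ᵥ M.col 2 ⨯₃ M.col 0 := by
        rw [← triple_product_eq_det, triple_product_permutation]
    _ = 0 := by rw [← cross_anticomm, hcross]; simp

theorem exists_rotation_mul_eq_zero {M : Matrix (Fin 3) (Fin 3) ℝ} (hM : M.det ≠ 0) :
    ∃ T ∈ specialOrthogonalGroup (Fin 3) ℝ,
      (T * M) 1 0 = 0 ∧ (T * M) 2 0 = 0 ∧ (T * M) 1 2 = 0 ∧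
      (T * M) 0 0 ≠ 0 ∧ (T * M) 1 1 ≠ 0 ∧ (T * M) 2 2 ≠ 0 := by
  obtain ⟨T, hT, h10, h20, h12⟩ := exists_rotation_mulVec_eq_zero (cross_col_ne_zero hM)
  change (T * M) 1 0 = 0 at h10
  change (T * M) 2 0 = 0 at h20
  change (T * M) 1 2 = 0 at h12
  have hdet : (T * M).det = (T * M) 0 0 * (T * M) 1 1 * (T * M) 2 2 := by
    rw [det_fin_three, h10, h20, h12]; ring
  have hne : (T * M).det ≠ 0 := by
    rwa [det_mul, (mem_specialOrthogonalGroup_iff.mp hT).2, one_mul]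
  rw [hdet, mul_ne_zero_iff, mul_ne_zero_iff] at hne
  exact ⟨T, hT, h10, h20, h12, hne.1.1, hne.1.2, hne.2⟩

end Rotation

section WhitneyUmbrella

/-- The standard Whitney umbrella, the model of the A-class in question. -/
def whitneyUmbrella (p : ℝ × ℝ) : Fin 3 → ℝ := ![p.1, p.1 * p.2, p.2 ^ 2]

theorem vanishesToOrder_quadratic (b c d : ℝ) :
    VanishesToOrder 2 fun p : ℝ × ℝ ↦ b * p.1 ^ 2 + c * (p.1 * p.2) + d * p.2 ^ 2 := by
  have huu := (vanishesToOrder_monomial 2 0).const_mul_left b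
  have huv := (vanishesToOrder_monomial 1 1).const_mul_left c
  have hvv := (vanishesToOrder_monomial 0 2).const_mul_left d
  exact ((huu.add huv).add hvv).congr_left fun p ↦ by ring

theorem contDiff_whitneyUmbrella : ContDiff ℝ ∞ whitneyUmbrella := by
  refine contDiff_pi.mpr fun i ↦ ?_
  fin_cases i
  · exact contDiff_fst
  · exact contDiff_fst.mul contDiff_snd
  · exact contDiff_snd.pow 2

theorem vanishesToOrder_whitneyUmbrella : VanishesToOrder 1 whitneyUmbrella :=
  vanishesToOrder_one_of_differentiableAt
    (contDiff_whitneyUmbrella.differentiable (by simp)).differentiableAt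
    (by simp [whitneyUmbrella])

theorem vanishesToOrder_whitneyUmbrella_sub :
    VanishesToOrder 2 fun p ↦ whitneyUmbrella p - p.1 • Pi.single 0 1 := by
  refine isBigO_pi.mpr fun i ↦ ?_
  fin_cases i
  · simpa [whitneyUmbrella] using isBigO_zero _ _
  · simpa [whitneyUmbrella] using vanishesToOrder_monomial 1 1
  · simpa [whitneyUmbrella] using vanishesToOrder_monomial 0 2

-- The umbrella is tangent to its first axis, so second derivatives transverse to that axis do not
-- affect the 2-jet.
theorem exists_twoJet_comp_whitneyUmbrella {F : Type*} [NormedAddCommGroup F] [NormedSpace ℝ F]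
    [CompleteSpace F] {f : (Fin 3 → ℝ) → F} (hf : ContDiff ℝ 3 f) (hf0 : f 0 = 0) :
    ∃ q : F, VanishesToOrder 3 fun p ↦
      f (whitneyUmbrella p) - (fderiv ℝ f 0 (whitneyUmbrella p) + p.1 ^ 2 • q) := by
  set R : (Fin 3 → ℝ) → F := fun x ↦ f x - fderiv ℝ f 0 x with hR
  have hRs : ContDiff ℝ 3 R := hf.sub (fderiv ℝ f 0).contDiff
  have hR2 : VanishesToOrder 2 R := by
    have hf1 := vanishesToOrder_one_of_differentiableAt
      (hf.differentiable (by simp)).differentiableAt hf0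
    simpa using hf1.sub_leadingForm (hf.of_le (by norm_num))
  have haxis : VanishesToOrder 1 fun p : ℝ × ℝ ↦ p.1 • (Pi.single 0 1 : Fin 3 → ℝ) :=
    vanishesToOrder_one_of_differentiableAt (by fun_prop) (by simp)
  have htransverse : VanishesToOrder 3 fun p ↦ R (whitneyUmbrella p) - R (p.1 • Pi.single 0 1) :=
    hR2.comp_sub_comp (hRs.of_le (by norm_num)) vanishesToOrder_whitneyUmbrella haxis
      vanishesToOrder_whitneyUmbrella_sub
  refine ⟨(Nat.factorial 2 : ℝ)⁻¹ • iteratedFDeriv ℝ 2 R 0 fun _ ↦ Pi.single 0 1, ?_⟩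
  refine (htransverse.add ((hR2.sub_leadingForm hRs).comp haxis)).congr_left fun p ↦ ?_
  have hform : (iteratedFDeriv ℝ 2 R 0 fun _ ↦ p.1 • Pi.single 0 1) =
      p.1 ^ 2 • iteratedFDeriv ℝ 2 R 0 fun _ ↦ Pi.single 0 1 := by
    rw [ContinuousMultilinearMap.map_smul_univ]; simp
  rw [hform, smul_comm, sub_add_sub_cancel]
  simp only [hR, sub_sub]

theorem mulVec_whitneyUmbrella_apply (M : Matrix (Fin 3) (Fin 3) ℝ) (p : ℝ × ℝ) (i : Fin 3) :
    (M *ᵥ whitneyUmbrella p) i = M i 0 * p.1 + M i 1 * (p.1 * p.2) + M i 2 * p.2 ^ 2 := by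
  simp [mulVec, dotProduct, Fin.sum_univ_three, whitneyUmbrella]

/-- The part of the 2-jet of a Whitney umbrella that the normalization controls. The quadratic part
of the first component is left free, since straightening that component removes it. -/
structure HasUmbrellaJet (F : ℝ × ℝ → Fin 3 → ℝ) (a b₀ b₁ c₀ c₁ c₂ : ℝ) : Prop where
  zero : VanishesToOrder 2 fun p ↦ F p 0 - a * p.1
  one : VanishesToOrder 3 fun p ↦ F p 1 - (b₀ * p.1 ^ 2 + b₁ * (p.1 * p.2))
  two : VanishesToOrder 3 fun p ↦ F p 2 - (c₀ * p.1 ^ 2 + c₁ * (p.1 * p.2) + c₂ * p.2 ^ 2)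

theorem hasUmbrellaJet_of_twoJet {F : ℝ × ℝ → Fin 3 → ℝ} {M : Matrix (Fin 3) (Fin 3) ℝ}
    {q : Fin 3 → ℝ}
    (hF : VanishesToOrder 3 fun p ↦ F p - (M *ᵥ whitneyUmbrella p + p.1 ^ 2 • q))
    (h10 : M 1 0 = 0) (h20 : M 2 0 = 0) (h12 : M 1 2 = 0) :
    HasUmbrellaJet F (M 0 0) (q 1) (M 1 1) (q 2) (M 2 1) (M 2 2) where
  zero := by
    have hquad := vanishesToOrder_quadratic (q 0) (M 0 1) (M 0 2)
    refine ((isBigO_pi.mp (hF.mono (Nat.le_succ 2)) 0).add hquad).congr_left fun p ↦ ?_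
    simp only [Pi.sub_apply, Pi.add_apply, Pi.smul_apply, smul_eq_mul, mulVec_whitneyUmbrella_apply]
    ring
  one := (isBigO_pi.mp hF 1).congr_left fun p ↦ by
    simp only [Pi.sub_apply, Pi.add_apply, Pi.smul_apply, smul_eq_mul, mulVec_whitneyUmbrella_apply,
      h10, h12]
    ring
  two := (isBigO_pi.mp hF 2).congr_left fun p ↦ by
    simp only [Pi.sub_apply, Pi.add_apply, Pi.smul_apply, smul_eq_mul, mulVec_whitneyUmbrella_apply,
      h20]
    ring

theorem exists_rotation_hasUmbrellaJet {f : (Fin 3 → ℝ) → Fin 3 → ℝ} (hf : ContDiff ℝ 3 f)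
    (hf0 : f 0 = 0)
    (hdet : LinearMap.det (fderiv ℝ f 0 : (Fin 3 → ℝ) →ₗ[ℝ] Fin 3 → ℝ) ≠ 0) :
    ∃ T ∈ specialOrthogonalGroup (Fin 3) ℝ, ∃ a b₀ b₁ c₀ c₁ c₂ : ℝ, a ≠ 0 ∧ b₁ ≠ 0 ∧ c₂ ≠ 0 ∧
      HasUmbrellaJet (fun p ↦ T *ᵥ f (whitneyUmbrella p)) a b₀ b₁ c₀ c₁ c₂ := by
  set M := LinearMap.toMatrix' (fderiv ℝ f 0 : (Fin 3 → ℝ) →ₗ[ℝ] Fin 3 → ℝ)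
  obtain ⟨T, hT, h10, h20, h12, h00, h11, h22⟩ :=
    exists_rotation_mul_eq_zero (M := M) (by rwa [LinearMap.det_toMatrix'])
  obtain ⟨q, hq⟩ := exists_twoJet_comp_whitneyUmbrella hf hf0
  refine ⟨T, hT, _, _, _, _, _, _, h00, h11, h22,
    hasUmbrellaJet_of_twoJet (q := T *ᵥ q) ?_ h10 h20 h12⟩
  refine ((T.mulVecLin.toContinuousLinearMap.isBigO_comp _ _).trans hq).congr_left fun p ↦ ?_
  have hM : fderiv ℝ f 0 (whitneyUmbrella p) = M *ᵥ whitneyUmbrella p := by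
    rw [LinearMap.toMatrix'_mulVec]; rfl
  simp [hM, mulVec_sub, mulVec_add, mulVec_smul]

namespace HasUmbrellaJet

variable {F : ℝ × ℝ → Fin 3 → ℝ} {a b₀ b₁ c₀ c₁ c₂ : ℝ}

theorem comp_linear (hF : HasUmbrellaJet F a b₀ b₁ c₀ c₁ c₂) {L : ℝ × ℝ → ℝ × ℝ} {k m n : ℝ}
    (hL : ∀ p, L p = (k * p.1, m * p.1 + n * p.2)) :
    HasUmbrellaJet (fun p ↦ F (L p)) (a * k) (b₀ * k ^ 2 + b₁ * k * m) (b₁ * k * n)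
      (c₀ * k ^ 2 + c₁ * k * m + c₂ * m ^ 2) (c₁ * k * n + 2 * c₂ * m * n) (c₂ * n ^ 2) := by
  have hL1 : VanishesToOrder 1 L := by
    rw [funext hL]
    exact vanishesToOrder_one_of_differentiableAt (by fun_prop) (by simp)
  exact
    { zero := (hF.zero.comp hL1).congr_left fun p ↦ by rw [hL]; ring
      one := (hF.one.comp hL1).congr_left fun p ↦ by rw [hL]; ring
      two := (hF.two.comp hL1).congr_left fun p ↦ by rw [hL]; ring }

theorem exists_comp_linear (hF : HasUmbrellaJet F a b₀ b₁ c₀ c₁ c₂) (ha : a ≠ 0) (hb₁ : b₁ ≠ 0)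
    (hc₂ : c₂ ≠ 0) :
    ∃ L : ℝ × ℝ →L[ℝ] ℝ × ℝ, LinearMap.det (L : ℝ × ℝ →ₗ[ℝ] ℝ × ℝ) ≠ 0 ∧
      ∃ c₀' c₁' c₂' : ℝ, c₂' ≠ 0 ∧ HasUmbrellaJet (fun p ↦ F (L p)) 1 0 1 c₀' c₁' c₂' := by
  set k := a⁻¹
  set m := -(b₀ * k / b₁)
  set n := (b₁ * k)⁻¹
  have hk : k ≠ 0 := inv_ne_zero ha
  have hn : n ≠ 0 := inv_ne_zero (mul_ne_zero hb₁ hk)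
  have hak : a * k = 1 := mul_inv_cancel₀ ha
  have hbm : b₀ * k ^ 2 + b₁ * k * m = 0 := by simp only [m]; field_simp; ring
  have hbn : b₁ * k * n = 1 := mul_inv_cancel₀ (mul_ne_zero hb₁ hk)
  let L : ℝ × ℝ →L[ℝ] ℝ × ℝ :=
    (k • ContinuousLinearMap.fst ℝ ℝ ℝ).prod
      (m • ContinuousLinearMap.fst ℝ ℝ ℝ + n • ContinuousLinearMap.snd ℝ ℝ ℝ)
  have hjet := hF.comp_linear (L := L) (k := k) (m := m) (n := n) fun p ↦ rfl
  rw [hak, hbm, hbn] at hjet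
  refine ⟨L, ?_, _, _, _, mul_ne_zero hc₂ (pow_ne_zero 2 hn), hjet⟩
  have hdet : LinearMap.det (L : ℝ × ℝ →ₗ[ℝ] ℝ × ℝ) = k * n := by
    rw [← LinearMap.det_toMatrix (Module.Basis.finTwoProd ℝ), det_fin_two]
    simp [LinearMap.toMatrix_apply, L]
  rw [hdet]
  exact mul_ne_zero hk hn

theorem comp_isTangentToId (hF : HasUmbrellaJet F a b₀ b₁ c₀ c₁ c₂) {χ : ℝ × ℝ → ℝ × ℝ}
    (hχ : IsTangentToId χ) : HasUmbrellaJet (fun p ↦ F (χ p)) a b₀ b₁ c₀ c₁ c₂ where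
  zero := by
    have hu : VanishesToOrder 2 fun p ↦ a * ((χ p).1 - p.1) :=
      (isBigO_prod_left.mp hχ.sub_id).1.const_mul_left a
    exact ((hF.zero.comp hχ.vanishesToOrder_one).add hu).congr_left fun p ↦ by ring
  one := by
    have hquad := hχ.comp_sub (vanishesToOrder_quadratic b₀ b₁ 0) (by fun_prop)
    exact ((hF.one.comp hχ.vanishesToOrder_one).add hquad).congr_left fun p ↦ by ring
  two := by
    have hquad := hχ.comp_sub (vanishesToOrder_quadratic c₀ c₁ c₂) (by fun_prop)
    exact ((hF.two.comp hχ.vanishesToOrder_one).add hquad).congr_left fun p ↦ by ring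

end HasUmbrellaJet

theorem exists_isTangentToId_comp_sub_fst {f : ℝ × ℝ → ℝ} (hfs : ContDiff ℝ ∞ f)
    (hf : VanishesToOrder 2 fun p ↦ f p - p.1) (n : ℕ) :
    ∃ χ : ℝ × ℝ → ℝ × ℝ, IsTangentToId χ ∧ VanishesToOrder n fun p ↦ f (χ p) - p.1 := by
  have hΨ : IsTangentToId fun p : ℝ × ℝ ↦ (f p, p.2) :=
    { contDiff := hfs.prodMk contDiff_snd
      sub_id := by simpa using! hf.prod_left (isBigO_zero _ _) }
  obtain ⟨χ, hχ, hn⟩ := hΨ.exists_comp_sub_id n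
  exact ⟨χ, hχ, (isBigO_prod_left.mp hn).1⟩

-- The cubic terms divisible by `u` are `u * q(u, v)`, and replacing `v` by `v - q` in `u * v`
-- cancels them.
theorem exists_isTangentToId_comp_sub_mul {f : ℝ × ℝ → ℝ} (hfs : ContDiff ℝ ∞ f)
    (hf : VanishesToOrder 3 fun p ↦ f p - p.1 * p.2) :
    ∃ θ : ℝ × ℝ → ℝ × ℝ, IsTangentToId θ ∧ (∀ p, (θ p).1 = p.1) ∧ ∃ b : ℝ,
      VanishesToOrder 4 fun p ↦ f (θ p) - (p.1 * p.2 + b * p.2 ^ 3) := by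
  obtain ⟨c, hc⟩ := hf.exists_binaryForm (n := 3)
    (contDiff_infty.mp (hfs.sub (contDiff_fst.mul contDiff_snd)) 4)
  let q : ℝ × ℝ → ℝ := fun p ↦ c 3 * p.1 ^ 2 + c 2 * (p.1 * p.2) + c 1 * p.2 ^ 2
  have hq : VanishesToOrder 2 q := vanishesToOrder_quadratic ..
  have hqs : ContDiff ℝ ∞ q := by fun_prop
  have hu : VanishesToOrder 1 fun p : ℝ × ℝ ↦ p.1 := by simpa using vanishesToOrder_monomial 1 0
  have hv : VanishesToOrder 1 fun p : ℝ × ℝ ↦ p.2 := by simpa using vanishesToOrder_monomial 0 1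
  have hθ : IsTangentToId fun p : ℝ × ℝ ↦ (p.1, p.2 - q p) :=
    { contDiff := contDiff_fst.prodMk (contDiff_snd.sub hqs)
      sub_id := by simpa using! (isBigO_zero _ _).prod_left hq.neg_left }
  refine ⟨_, hθ, fun _ ↦ rfl, c 0, ?_⟩
  have hform := hc.comp hθ.vanishesToOrder_one
  have hq_diff : VanishesToOrder 4 fun p ↦ p.1 * (q (p.1, p.2 - q p) - q p) :=
    hu.mul (hθ.comp_sub hq (contDiff_infty.mp hqs 2))
  have hcube_diff : VanishesToOrder 4 fun p ↦ c 0 * ((p.2 - q p) ^ 3 - p.2 ^ 3) := by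
    have hw : VanishesToOrder 1 fun p ↦ p.2 - q p := hv.sub (hq.mono one_le_two)
    have hfactor := (vanishesToOrder_quadratic 1 1 1).comp (hw.prod_left hv)
    exact ((hq.mul hfactor).const_mul_left (-c 0)).congr_left fun p ↦ by ring
  refine ((hform.add hq_diff).add hcube_diff).congr_left fun p ↦ ?_
  simp only [Finset.sum_range_succ, Finset.sum_range_zero, Nat.reduceSub, q]
  ring

theorem HasUmbrellaJet.exists_normalForm {F : ℝ × ℝ → Fin 3 → ℝ} {c₀ c₁ c₂ : ℝ}
    (hFs : ContDiff ℝ ∞ F) (hF : HasUmbrellaJet F 1 0 1 c₀ c₁ c₂) :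
    ∃ ψ : ℝ × ℝ → ℝ × ℝ, IsTangentToId ψ ∧ ∃ (b : ℝ) (d : ℕ → ℝ), VanishesToOrder 4 fun p ↦
      F (ψ p) - ![p.1, p.1 * p.2 + b * p.2 ^ 3, c₀ * p.1 ^ 2 + c₁ * (p.1 * p.2) + c₂ * p.2 ^ 2 +
        ∑ k ∈ Finset.range 4, d k * (p.1 ^ k * p.2 ^ (3 - k))] := by
  have hcomp : ∀ {ψ : ℝ × ℝ → ℝ × ℝ}, IsTangentToId ψ → ∀ i, ContDiff ℝ ∞ fun p ↦ F (ψ p) i :=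
    fun hψ ↦ contDiff_pi.mp (hFs.comp hψ.contDiff)
  obtain ⟨χ, hχ, hfst⟩ := exists_isTangentToId_comp_sub_fst (contDiff_pi.mp hFs 0)
    (by simpa using hF.zero) 4
  obtain ⟨θ, hθ, hθfst, b, hsnd⟩ := exists_isTangentToId_comp_sub_mul (hcomp hχ 1)
    (by simpa using (hF.comp_isTangentToId hχ).one)
  have hψ := hχ.comp hθ
  obtain ⟨d, hthd⟩ := (hF.comp_isTangentToId hψ).two.exists_binaryForm (n := 3)
    (contDiff_infty.mp ((hcomp hψ 2).sub (by fun_prop)) 4)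
  refine ⟨_, hψ, b, d, isBigO_pi.mpr fun i ↦ ?_⟩
  fin_cases i
  · exact (hfst.comp hθ.vanishesToOrder_one).congr_left fun p ↦ by simp [hθfst]
  · exact hsnd
  · exact hthd.congr_left fun p ↦ by simp [sub_sub]

end WhitneyUmbrella

/-- West's normal form, truncated at third order: if a smooth germ
`g : (ℝ²,0) → (ℝ³,0)` is A-equivalent to the standard Whitney umbrella
`(u,v) ↦ (u, uv, v²)`, then there are `T ∈ SO(3)` and a local diffeomorphism `φ`
of `(ℝ²,0)` such that the 3-jet of `T∘g∘φ` is
`(u, uv + (b₃/6)v³, Σ_{i+j=2,3} (a_{ij}/(i!j!)) uⁱvʲ)` with `a₀₂ ≠ 0`. -/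
theorem stmt17 (g : ℝ × ℝ → Fin 3 → ℝ) (hgs : ContDiff ℝ (⊤ : ℕ∞) g) (hg0 : g 0 = 0)
    (φ₁ : ℝ × ℝ → ℝ × ℝ) (φ₂ : (Fin 3 → ℝ) → Fin 3 → ℝ)
    (hφ₁s : ContDiff ℝ (⊤ : ℕ∞) φ₁) (hφ₁0 : φ₁ 0 = 0)
    (hφ₁d : LinearMap.det ((fderiv ℝ φ₁ 0) : ℝ × ℝ →ₗ[ℝ] ℝ × ℝ) ≠ 0)
    (hφ₂s : ContDiff ℝ (⊤ : ℕ∞) φ₂) (hφ₂0 : φ₂ 0 = 0)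
    (hφ₂d : LinearMap.det ((fderiv ℝ φ₂ 0) : (Fin 3 → ℝ) →ₗ[ℝ] Fin 3 → ℝ) ≠ 0)
    (hAeq : ∀ᶠ p : ℝ × ℝ in nhds 0, g (φ₁ p) = φ₂ ![p.1, p.1 * p.2, p.2 ^ 2]) :
    ∃ (T : Matrix (Fin 3) (Fin 3) ℝ) (φ : ℝ × ℝ → ℝ × ℝ)
      (b3 a20 a11 a02 a30 a21 a12 a03 : ℝ),
      T * T.transpose = 1 ∧ T.det = 1 ∧
      ContDiff ℝ (⊤ : ℕ∞) φ ∧ φ 0 = 0 ∧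
      LinearMap.det ((fderiv ℝ φ 0) : ℝ × ℝ →ₗ[ℝ] ℝ × ℝ) ≠ 0 ∧
      a02 ≠ 0 ∧
      (fun p : ℝ × ℝ =>
          T.mulVec (g (φ p)) -
            ![p.1, p.1 * p.2 + b3 / 6 * p.2 ^ 3,
              a20 / 2 * p.1 ^ 2 + a11 * p.1 * p.2 + a02 / 2 * p.2 ^ 2 +
                a30 / 6 * p.1 ^ 3 + a21 / 2 * p.1 ^ 2 * p.2 +
                a12 / 2 * p.1 * p.2 ^ 2 + a03 / 6 * p.2 ^ 3])
        =o[nhds 0] fun p : ℝ × ℝ => ‖p‖ ^ 3 := by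
  obtain ⟨T, hT, _, _, _, _, _, _, ha, hb, hc, hjet⟩ :=
    exists_rotation_hasUmbrellaJet (contDiff_infty.mp hφ₂s 3) hφ₂0 hφ₂d
  obtain ⟨L, hL, c₀, c₁, c₂, hc₂, hLjet⟩ := hjet.exists_comp_linear ha hb hc
  have hTφ₂s : ContDiff ℝ ∞ fun p ↦ T *ᵥ φ₂ (whitneyUmbrella (L p)) :=
    T.mulVecLin.toContinuousLinearMap.contDiff.comp
      (hφ₂s.comp (contDiff_whitneyUmbrella.comp L.contDiff))
  obtain ⟨ψ, hψ, b, d, hnf⟩ := hLjet.exists_normalForm hTφ₂s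
  have hLψ := (isDiffeoGerm_continuousLinearMap hL).comp hψ.isDiffeoGerm
  have hφ : IsDiffeoGerm fun p ↦ φ₁ (L (ψ p)) := IsDiffeoGerm.comp ⟨hφ₁s, hφ₁0, hφ₁d⟩ hLψ
  have hLψ0 : Tendsto (fun p ↦ L (ψ p)) (𝓝 0) (𝓝 0) := by
    simpa only [hLψ.map_zero] using hLψ.contDiff.continuous.tendsto 0
  rw [mem_specialOrthogonalGroup_iff, mem_orthogonalGroup_iff] at hT
  refine ⟨T, _, 6 * b, 2 * c₀, c₁, 2 * c₂, 6 * d 3, 2 * d 2, 2 * d 1, 6 * d 0, hT.1, hT.2,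
    hφ.contDiff, hφ.map_zero, hφ.det_fderiv_ne_zero, mul_ne_zero two_ne_zero hc₂, ?_⟩
  refine (hnf.trans_isLittleO (isLittleO_norm_pow_norm_pow (by norm_num))).congr' ?_ .rfl
  filter_upwards [hLψ0.eventually hAeq] with p hp
  rw [hp, whitneyUmbrella]
  simp only [Finset.sum_range_succ, Finset.sum_range_zero, Nat.reduceSub]
  ring_nf
end
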